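/- arXiv:1510.05274 — 4 statements merged into one kernel-verified Lean document; each statement's English description precedes it below -/
import Mathlib

section
/- Let α₀ > 0, β₀ > 0 and λ > 0, and let (φ,ψ) ∈ H¹(ℝ)×H¹(ℝ) satisfy ∫_ℝ φ² ψ dx = λ and I(φ,ψ) = M_λ. Then (the continuous representatives of) φ and ψ are infinitely differentiable on ℝ, and every derivative φ^{(k)}, ψ^{(k)} (k ≥ 0) is square-integrable on ℝ (i.e. φ, ψ ∈ H^∞(ℝ)). -/
open MeasureTheory Filter Topology

noncomputable section

/-- Membership in `H¹(ℝ)`: `f` is differentiable with `f` and `f'` square-integrable. -/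
def InH1 (f : ℝ → ℝ) : Prop :=
  Differentiable ℝ f ∧ Integrable (fun x => f x ^ 2) ∧ Integrable (fun x => deriv f x ^ 2)

/-- The functional `I(f,g) = ∫ (f'² + g'² + α₀ f² + β₀ g²)`. -/
def Ifun (α₀ β₀ : ℝ) (f g : ℝ → ℝ) : ℝ :=
  ∫ x : ℝ, (deriv f x ^ 2 + deriv g x ^ 2 + α₀ * f x ^ 2 + β₀ * g x ^ 2)

/-- The set of values `I(f,g)` over pairs in `H¹ × H¹` with `∫ f² g = lam`. -/
def IvalSet (α₀ β₀ lam : ℝ) : Set ℝ :=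
  {m | ∃ f g : ℝ → ℝ, InH1 f ∧ InH1 g ∧ (∫ x : ℝ, f x ^ 2 * g x) = lam ∧ Ifun α₀ β₀ f g = m}

/-- `M_lam`, the infimum of `I` subject to the constraint `∫ f² g = lam`. -/
def Mfun (α₀ β₀ lam : ℝ) : ℝ := sInf (IvalSet α₀ β₀ lam)

/-!
The constraint `∫ f² g` is homogeneous of degree three and `I` of degree two, so rescaling a pair
with `∫ f² g = m` onto the constraint set gives `M_lam * (m / lam) ^ (2/3) ≤ I(f, g)`, with equality
at a minimizer. Comparing the derivatives of both sides along `(φ + ε h, ψ + ε k)` yields the weak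
Euler–Lagrange system `φ'' = α₀ φ - 2 c φ ψ`, `ψ'' = β₀ ψ - c φ²` with `c = M_lam / (3 lam)`.
The right-hand sides are continuous, so by the du Bois-Reymond lemma the equations hold pointwise.
Since `H^n(ℝ)` is closed under products for `n ≥ 1`, the right-hand sides lie in `H^n` whenever `φ`
and `ψ` do, which puts `φ` and `ψ` in `H^(n+2)`.
-/

open scoped ContDiff

/-! ### Weak solutions of `u'' = q` -/

section WeakSolution

variable {E : Type*} [NormedAddCommGroup E] [NormedSpace ℝ E] [CompleteSpace E]

theorem exists_contDiff_hasCompactSupport_deriv_eq {θ : ℝ → E} (hθ : ContDiff ℝ ∞ θ)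
    (hθs : HasCompactSupport θ) (hθ0 : ∫ x, θ x = 0) :
    ∃ g : ℝ → E, ContDiff ℝ ∞ g ∧ HasCompactSupport g ∧ deriv g = θ := by
  obtain ⟨R, hR⟩ := hθs.isCompact.isBounded.subset_ball (0 : ℝ)
  have hsupp : Function.support θ ⊆ Set.Ioo (-R) R := by
    simpa [Real.ball_eq_Ioo] using (subset_tsupport θ).trans hR
  let g : ℝ → E := fun x => ∫ t in (-R)..x, θ t
  have hg : ∀ x, HasDerivAt g (θ x) x := fun x =>
    (hθ.continuous.integral_hasStrictDerivAt (-R) x).hasDerivAt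
  have hg' : deriv g = θ := funext fun x => (hg x).deriv
  refine ⟨g, contDiff_infty_iff_deriv.2 ⟨fun x => (hg x).differentiableAt, hg' ▸ hθ⟩,
    .intro (isCompact_Icc (a := -R) (b := R)) fun x hx => ?_, hg'⟩
  rcases lt_or_ge x (-R) with hxR | hxR
  · refine intervalIntegral.integral_zero_ae (.of_forall fun t ht => ?_)
    rw [Set.uIoc_of_ge hxR.le] at ht
    exact Function.notMem_support.1 fun hts => ht.2.not_gt (hsupp hts).1
  · have hRx : R < x := not_le.1 fun hxR' => hx ⟨hxR, hxR'⟩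
    have hsub : Function.support θ ⊆ Set.Ioc (-R) x := fun t ht =>
      ⟨(hsupp ht).1, ((hsupp ht).2.trans hRx).le⟩
    exact (intervalIntegral.integral_eq_integral_of_support_subset hsub).trans hθ0

/-- The du Bois-Reymond lemma. Subtracting `(∫ η) χ` from a test function `η`, for a fixed bump `χ`
of integral one, leaves the derivative of a test function, so `w - ∫ χ w` is orthogonal to `η`. -/
theorem ae_eq_const_of_integral_deriv_smul_eq_zero {w : ℝ → E} (hw : LocallyIntegrable w)
    (h : ∀ g : ℝ → ℝ, ContDiff ℝ ∞ g → HasCompactSupport g → ∫ x, deriv g x • w x = 0) :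
    ∃ c : E, ∀ᵐ x, w x = c := by
  let b : ContDiffBump (0 : ℝ) := default
  let χ : ℝ → ℝ := b.normed volume
  have hχ : ContDiff ℝ ∞ χ := b.contDiff_normed
  have hχs : HasCompactSupport χ := b.hasCompactSupport_normed
  have hχi : Integrable χ := hχ.continuous.integrable_of_hasCompactSupport hχs
  have hχw : Integrable fun x => χ x • w x :=
    hw.integrable_smul_left_of_hasCompactSupport hχ.continuous hχs
  let c : E := ∫ x, χ x • w x
  refine ⟨c, ae_eq_of_integral_contDiff_smul_eq hw (locallyIntegrable_const c)
    fun η hη hηs => ?_⟩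
  have hηi : Integrable η := hη.continuous.integrable_of_hasCompactSupport hηs
  have hηw : Integrable fun x => η x • w x :=
    hw.integrable_smul_left_of_hasCompactSupport hη.continuous hηs
  let m : ℝ := ∫ x, η x
  have hmean : ∫ x, (η x - m * χ x) = 0 := by
    rw [integral_sub hηi (hχi.const_mul m), integral_const_mul, b.integral_normed, mul_one,
      sub_self]
  obtain ⟨g, hg, hgs, hg'⟩ := exists_contDiff_hasCompactSupport_deriv_eq
    (hη.sub (contDiff_const.mul hχ)) (hηs.sub hχs.mul_left) hmean
  have horth : (∫ x, η x • w x) - m • c = 0 := by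
    rw [← h g hg hgs, hg', ← integral_smul, ← integral_sub hηw (hχw.fun_smul m)]
    simp only [sub_smul, mul_smul]
  rw [integral_smul_const, sub_eq_zero.1 horth]

theorem exists_hasDerivAt_ae_eq_of_weak {v q : ℝ → E} (hv : LocallyIntegrable v)
    (hq : Continuous q)
    (h : ∀ g : ℝ → ℝ, ContDiff ℝ ∞ g → HasCompactSupport g →
      ∫ x, (deriv g x • v x + g x • q x) = 0) :
    ∃ V : ℝ → E, (∀ x, HasDerivAt V (q x) x) ∧ v =ᵐ[volume] V := by
  let Q : ℝ → E := fun x => ∫ t in (0 : ℝ)..x, q t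
  have hQ : ∀ x, HasDerivAt Q (q x) x := fun x => (hq.integral_hasStrictDerivAt 0 x).hasDerivAt
  have hQc : Continuous Q := continuous_iff_continuousAt.2 fun x => (hQ x).continuousAt
  suffices hconst : ∃ c : E, ∀ᵐ x, v x - Q x = c by
    obtain ⟨c, hc⟩ := hconst
    exact ⟨fun x => Q x + c, fun x => (hQ x).add_const c, hc.mono fun x hx => by simp [← hx]⟩
  refine ae_eq_const_of_integral_deriv_smul_eq_zero (hv.sub hQc.locallyIntegrable)
    fun g hg hgs => ?_
  have hg' : Continuous (deriv g) := hg.continuous_deriv (by simp)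
  have hgv : Integrable fun x => deriv g x • v x :=
    hv.integrable_smul_left_of_hasCompactSupport hg' hgs.deriv
  have hgQ' : Integrable fun x => deriv g x • Q x :=
    (hg'.smul hQc).integrable_of_hasCompactSupport hgs.deriv.smul_right
  have hgq : Integrable fun x => g x • q x :=
    (hg.continuous.smul hq).integrable_of_hasCompactSupport hgs.smul_right
  have hgQ : Integrable fun x => g x • Q x :=
    (hg.continuous.smul hQc).integrable_of_hasCompactSupport hgs.smul_right
  have hparts : ∫ x, (g x • q x + deriv g x • Q x) = 0 :=
    integral_eq_zero_of_hasDerivAt_of_integrable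
      (fun x => ((hg.differentiable (by simp)) x).hasDerivAt.smul (hQ x)) (hgq.add hgQ') hgQ
  calc ∫ x, deriv g x • (v x - Q x)
      = ∫ x, ((deriv g x • v x + g x • q x) - (g x • q x + deriv g x • Q x)) := by
        congr 1; ext x; rw [smul_sub]; abel
    _ = 0 := by
        rw [integral_sub (hgv.fun_add hgq) (hgq.fun_add hgQ'), h g hg hgs, hparts, sub_zero]

theorem hasDerivAt_of_deriv_ae_eq {u V : ℝ → E} (hu : Differentiable ℝ u) (hV : Continuous V)
    (h : deriv u =ᵐ[volume] V) (x : ℝ) : HasDerivAt u (V x) x := by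
  have hint : ∀ y, IntervalIntegrable (deriv u) volume 0 y := fun y =>
    (hV.intervalIntegrable 0 y).congr_ae (ae_restrict_of_ae h.symm)
  have hFTC : u = fun y => u 0 + ∫ t in (0 : ℝ)..y, V t := by
    ext y
    rw [← intervalIntegral.integral_congr_ae_restrict (ae_restrict_of_ae h),
      intervalIntegral.integral_eq_sub_of_hasDerivAt (fun t _ => (hu t).hasDerivAt)
        (hint y), add_sub_cancel]
  rw [hFTC]
  exact (hV.integral_hasStrictDerivAt 0 x).hasDerivAt.const_add (u 0)

theorem hasDerivAt_deriv_of_weak {u q : ℝ → E} (hu : Differentiable ℝ u)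
    (hu' : LocallyIntegrable (deriv u)) (hq : Continuous q)
    (h : ∀ g : ℝ → ℝ, ContDiff ℝ ∞ g → HasCompactSupport g →
      ∫ x, (deriv g x • deriv u x + g x • q x) = 0) (x : ℝ) :
    HasDerivAt (deriv u) (q x) x := by
  obtain ⟨V, hV, huV⟩ := exists_hasDerivAt_ae_eq_of_weak hu' hq h
  have hVc : Continuous V := continuous_iff_continuousAt.2 fun y => (hV y).continuousAt
  have hderiv : deriv u = V := funext fun y => (hasDerivAt_of_deriv_ae_eq hu hVc huV y).deriv
  exact hderiv ▸ hV x

theorem exists_norm_le_of_integrable_deriv {F F' : ℝ → E} (hF : ∀ x, HasDerivAt F (F' x) x)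
    (hF' : Integrable F') : ∃ C, ∀ x, ‖F x‖ ≤ C := by
  refine ⟨‖F 0‖ + ∫ t, ‖F' t‖, fun x => ?_⟩
  have hFTC : F x = F 0 + ∫ t in (0 : ℝ)..x, F' t := by
    rw [intervalIntegral.integral_eq_sub_of_hasDerivAt (fun t _ => hF t) hF'.intervalIntegrable,
      add_sub_cancel]
  rw [hFTC]
  refine (norm_add_le _ _).trans (add_le_add_right ?_ _)
  exact intervalIntegral.norm_integral_le_integral_norm_uIoc.trans
    (setIntegral_le_integral hF'.norm (.of_forall fun _ => norm_nonneg _))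

end WeakSolution

/-! ### The spaces `H^n(ℝ)` -/

namespace InH1

variable {f g h : ℝ → ℝ}

theorem memLp (hf : InH1 f) : MemLp f 2 :=
  (memLp_two_iff_integrable_sq hf.1.continuous.aestronglyMeasurable).2 hf.2.1

theorem memLp_deriv (hf : InH1 f) : MemLp (deriv f) 2 :=
  (memLp_two_iff_integrable_sq (aestronglyMeasurable_deriv f volume)).2 hf.2.2

theorem of_memLp (hd : Differentiable ℝ f) (hf : MemLp f 2) (hf' : MemLp (deriv f) 2) : InH1 f :=
  ⟨hd, hf.integrable_sq, hf'.integrable_sq⟩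

theorem of_contDiff_of_hasCompactSupport (hf : ContDiff ℝ 1 f) (hs : HasCompactSupport f) :
    InH1 f :=
  of_memLp (hf.differentiable one_ne_zero) (hf.continuous.memLp_of_hasCompactSupport hs)
    ((hf.continuous_deriv le_rfl).memLp_of_hasCompactSupport hs.deriv)

-- `f²` is bounded because its derivative `2 f f'` is integrable.
theorem memLp_top (hf : InH1 f) : MemLp f ⊤ := by
  have hsq : ∀ x, HasDerivAt (fun y => f y ^ 2) (2 * (f x * deriv f x)) x := fun x =>
    ((hf.1 x).hasDerivAt.fun_pow 2).congr_deriv (by push_cast; ring)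
  obtain ⟨C, hC⟩ := exists_norm_le_of_integrable_deriv hsq
    ((hf.memLp.integrable_mul hf.memLp_deriv).const_mul 2)
  exact memLp_top_of_bound hf.1.continuous.aestronglyMeasurable √C
    (.of_forall fun x => Real.abs_le_sqrt ((le_abs_self _).trans (hC x)))

theorem memLp_mul (hf : InH1 f) (hg : InH1 g) : MemLp (fun x => f x * g x) 2 :=
  hg.memLp.mul' hf.memLp_top

theorem integrable_mul_mul (hf : InH1 f) (hg : InH1 g) (hh : InH1 h) :
    Integrable fun x => f x * g x * h x :=
  (hf.memLp_mul hg).integrable_mul hh.memLp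

theorem integrable_sq_mul (hf : InH1 f) (hg : InH1 g) : Integrable fun x => f x ^ 2 * g x := by
  simpa only [sq] using hf.integrable_mul_mul hf hg

end InH1

/-- The Sobolev space `H^n(ℝ)`, as a predicate on functions: `f, f', …, f⁽ⁿ⁾` lie in `L²(ℝ)`, the
first `n` of them being differentiable everywhere. As in `InH1`, derivatives are classical. -/
def InHk : ℕ → (ℝ → ℝ) → Prop
  | 0, f => MemLp f 2
  | n + 1, f => Differentiable ℝ f ∧ MemLp f 2 ∧ InHk n (deriv f)

namespace InHk

variable {f g : ℝ → ℝ} {n : ℕ}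

theorem memLp (hf : InHk n f) : MemLp f 2 := by
  cases n with
  | zero => exact hf
  | succ n => exact hf.2.1

theorem of_succ (hf : InHk (n + 1) f) : InHk n f := by
  induction n generalizing f with
  | zero => exact hf.2.1
  | succ n ih => exact ⟨hf.1, hf.2.1, ih hf.2.2⟩

theorem inH1 (hf : InHk (n + 1) f) : InH1 f := .of_memLp hf.1 hf.memLp hf.2.2.memLp

theorem const_mul (hf : InHk n f) (c : ℝ) : InHk n fun x => c * f x := by
  induction n generalizing f with
  | zero => exact MemLp.const_mul hf c
  | succ n ih =>
    refine ⟨hf.1.const_mul c, hf.memLp.const_mul c, ?_⟩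
    simpa only [deriv_const_mul_field'] using ih hf.2.2

theorem add (hf : InHk n f) (hg : InHk n g) : InHk n fun x => f x + g x := by
  induction n generalizing f g with
  | zero => exact MemLp.add hf hg
  | succ n ih =>
    refine ⟨hf.1.add hg.1, hf.memLp.add hg.memLp, ?_⟩
    have hderiv : deriv (fun x => f x + g x) = fun x => deriv f x + deriv g x :=
      funext fun x => deriv_fun_add (hf.1 x) (hg.1 x)
    exact hderiv ▸ ih hf.2.2 hg.2.2

theorem sub (hf : InHk n f) (hg : InHk n g) : InHk n fun x => f x - g x := by
  simpa only [neg_one_mul, ← sub_eq_add_neg] using hf.add (hg.const_mul (-1))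

theorem mul (hf : InHk (n + 1) f) (hg : InHk (n + 1) g) : InHk (n + 1) fun x => f x * g x := by
  have hderiv : ∀ {f g : ℝ → ℝ}, Differentiable ℝ f → Differentiable ℝ g →
      deriv (fun x => f x * g x) = fun x => deriv f x * g x + f x * deriv g x := fun hf hg =>
    funext fun x => deriv_fun_mul (hf x) (hg x)
  induction n generalizing f g with
  | zero =>
    refine ⟨hf.1.mul hg.1, hf.inH1.memLp_mul hg.inH1, hderiv hf.1 hg.1 ▸ ?_⟩
    exact (hg.inH1.memLp_top.mul' hf.2.2.memLp).add (hg.2.2.memLp.mul' hf.inH1.memLp_top)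
  | succ n ih =>
    refine ⟨hf.1.mul hg.1, hf.inH1.memLp_mul hg.inH1, hderiv hf.1 hg.1 ▸ ?_⟩
    exact (ih hf.2.2 hg.of_succ).add (ih hf.of_succ hg.2.2)

theorem contDiff (hf : InHk (n + 1) f) : ContDiff ℝ n f := by
  induction n generalizing f with
  | zero => exact contDiff_zero.2 hf.1.continuous
  | succ n ih => exact contDiff_succ_iff_deriv.2 ⟨hf.1, by simp, ih hf.2.2⟩

theorem memLp_iteratedDeriv (hf : InHk n f) : MemLp (iteratedDeriv n f) 2 := by
  induction n generalizing f with
  | zero => rw [iteratedDeriv_zero]; exact hf.memLp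
  | succ n ih => simpa only [iteratedDeriv_succ'] using ih hf.2.2

end InHk

namespace InH1

variable {f g u q : ℝ → ℝ}

theorem inHk_one (hf : InH1 f) : InHk 1 f := ⟨hf.1, hf.memLp, hf.memLp_deriv⟩

theorem const_mul (hf : InH1 f) (c : ℝ) : InH1 fun x => c * f x := (hf.inHk_one.const_mul c).inH1

theorem add (hf : InH1 f) (hg : InH1 g) : InH1 fun x => f x + g x :=
  (hf.inHk_one.add hg.inHk_one).inH1

theorem inHk_add_two {n : ℕ} (hu : InH1 u) (hu' : ∀ x, HasDerivAt (deriv u) (q x) x)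
    (hq : InHk n q) : InHk (n + 2) u := by
  refine ⟨hu.1, hu.memLp, fun x => (hu' x).differentiableAt, hu.memLp_deriv, ?_⟩
  rwa [funext fun x => (hu' x).deriv]

end InH1

/-! ### The Euler–Lagrange system -/

-- The difference of the two sides of `h` has a local minimum, equal to zero, at `t`.
theorem hasDerivAt_eq_of_mul_rpow_le {J m : ℝ → ℝ} {J' m' p t : ℝ} (hJ : HasDerivAt J J' t)
    (hm : HasDerivAt m m' t) (hmt : m t ≠ 0)
    (h : ∀ᶠ ε in 𝓝 t, J t * (m ε / m t) ^ p ≤ J ε) : J' = J t * (p * (m' / m t)) := by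
  have hone : m t / m t = 1 := div_self hmt
  have hderiv := hJ.sub
    (((hm.div_const (m t)).rpow_const (p := p) (.inl (hone ▸ one_ne_zero))).const_mul (J t))
  have hmin : IsLocalMin (J - fun ε => J t * (m ε / m t) ^ p) t := by
    filter_upwards [h] with ε hε
    simpa [hone] using hε
  have hzero := hmin.hasDerivAt_eq_zero hderiv
  rw [hone, Real.one_rpow] at hzero
  linarith

/-- The symmetric bilinear form on `H¹ × H¹` whose quadratic form is `Ifun α₀ β₀`. -/
def Iform (α₀ β₀ : ℝ) (φ ψ h k : ℝ → ℝ) : ℝ :=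
  ∫ x, (deriv φ x * deriv h x + deriv ψ x * deriv k x + α₀ * (φ x * h x) + β₀ * (ψ x * k x))

/-- The derivative at `(φ, ψ)`, in the direction `(h, k)`, of the constraint `∫ f² g`. -/
def constraintDeriv (φ ψ h k : ℝ → ℝ) : ℝ :=
  ∫ x, (2 * (φ x * ψ x * h x) + φ x * φ x * k x)

section Variation

variable {α₀ β₀ lam : ℝ} {f g φ ψ h k : ℝ → ℝ}

theorem integrable_Ifun (hf : InH1 f) (hg : InH1 g) :
    Integrable fun x => deriv f x ^ 2 + deriv g x ^ 2 + α₀ * f x ^ 2 + β₀ * g x ^ 2 :=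
  ((hf.2.2.add hg.2.2).add (hf.2.1.const_mul α₀)).add (hg.2.1.const_mul β₀)

theorem integrable_Iform (hφ : InH1 φ) (hψ : InH1 ψ) (hh : InH1 h) (hk : InH1 k) :
    Integrable fun x =>
      deriv φ x * deriv h x + deriv ψ x * deriv k x + α₀ * (φ x * h x) + β₀ * (ψ x * k x) :=
  (((hφ.memLp_deriv.integrable_mul hh.memLp_deriv).add
    (hψ.memLp_deriv.integrable_mul hk.memLp_deriv)).add
    ((hφ.memLp.integrable_mul hh.memLp).const_mul α₀)).add
    ((hψ.memLp.integrable_mul hk.memLp).const_mul β₀)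

theorem integrable_constraintDeriv (hφ : InH1 φ) (hψ : InH1 ψ) (hh : InH1 h) (hk : InH1 k) :
    Integrable fun x => 2 * (φ x * ψ x * h x) + φ x * φ x * k x :=
  ((hφ.integrable_mul_mul hψ hh).const_mul 2).add (hφ.integrable_mul_mul hφ hk)

theorem Ifun_const_mul (t : ℝ) :
    Ifun α₀ β₀ (fun x => t * f x) (fun x => t * g x) = t ^ 2 * Ifun α₀ β₀ f g := by
  unfold Ifun
  rw [← integral_const_mul]
  congr 1; ext x
  simp only [deriv_const_mul_field']
  ring

theorem constraint_const_mul (t : ℝ) :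
    ∫ x, (t * f x) ^ 2 * (t * g x) = t ^ 3 * ∫ x, f x ^ 2 * g x := by
  rw [← integral_const_mul]
  congr 1; ext x; ring

theorem Ifun_add_mul (hφ : InH1 φ) (hψ : InH1 ψ) (hh : InH1 h) (hk : InH1 k) (ε : ℝ) :
    Ifun α₀ β₀ (fun x => φ x + ε * h x) (fun x => ψ x + ε * k x) =
      Ifun α₀ β₀ φ ψ + ε * (2 * Iform α₀ β₀ φ ψ h k) + ε ^ 2 * Ifun α₀ β₀ h k := by
  have hderiv : ∀ {f g : ℝ → ℝ}, InH1 f → InH1 g → ∀ x,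
      deriv (fun x => f x + ε * g x) x = deriv f x + ε * deriv g x := fun hf hg x =>
    ((hf.1 x).hasDerivAt.add ((hg.1 x).hasDerivAt.const_mul ε)).deriv
  have i₀ := integrable_Ifun (α₀ := α₀) (β₀ := β₀) hφ hψ
  have i₁ := ((integrable_Iform (α₀ := α₀) (β₀ := β₀) hφ hψ hh hk).const_mul 2).const_mul ε
  have i₂ := (integrable_Ifun (α₀ := α₀) (β₀ := β₀) hh hk).const_mul (ε ^ 2)
  unfold Ifun Iform
  rw [← integral_const_mul, ← integral_const_mul, ← integral_const_mul, ← integral_add i₀ i₁,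
    ← integral_add (i₀.fun_add i₁) i₂]
  congr 1; ext x
  rw [hderiv hφ hh, hderiv hψ hk]
  ring

theorem constraint_add_mul (hφ : InH1 φ) (hψ : InH1 ψ) (hh : InH1 h) (hk : InH1 k) (ε : ℝ) :
    ∫ x, (φ x + ε * h x) ^ 2 * (ψ x + ε * k x) =
      (∫ x, φ x ^ 2 * ψ x) + ε * constraintDeriv φ ψ h k + ε ^ 2 * constraintDeriv h k φ ψ
        + ε ^ 3 * ∫ x, h x ^ 2 * k x := by
  have i₀ := hφ.integrable_sq_mul hψ
  have i₁ := (integrable_constraintDeriv hφ hψ hh hk).const_mul ε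
  have i₂ := (integrable_constraintDeriv hh hk hφ hψ).const_mul (ε ^ 2)
  have i₃ := (hh.integrable_sq_mul hk).const_mul (ε ^ 3)
  unfold constraintDeriv
  rw [← integral_const_mul, ← integral_const_mul, ← integral_const_mul, ← integral_add i₀ i₁,
    ← integral_add (i₀.fun_add i₁) i₂, ← integral_add ((i₀.fun_add i₁).fun_add i₂) i₃]
  congr 1; ext x; ring

theorem hasDerivAt_Ifun_add_mul (hφ : InH1 φ) (hψ : InH1 ψ) (hh : InH1 h) (hk : InH1 k) :
    HasDerivAt (fun ε : ℝ => Ifun α₀ β₀ (fun x => φ x + ε * h x) (fun x => ψ x + ε * k x))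
      (2 * Iform α₀ β₀ φ ψ h k) 0 := by
  simp only [Ifun_add_mul hφ hψ hh hk]
  have hid := hasDerivAt_id' (0 : ℝ)
  exact (((hid.mul_const _).const_add _).add ((hid.fun_pow 2).mul_const _)).congr_deriv (by simp)

theorem hasDerivAt_constraint_add_mul (hφ : InH1 φ) (hψ : InH1 ψ) (hh : InH1 h) (hk : InH1 k) :
    HasDerivAt (fun ε : ℝ => ∫ x, (φ x + ε * h x) ^ 2 * (ψ x + ε * k x))
      (constraintDeriv φ ψ h k) 0 := by
  simp only [constraint_add_mul hφ hψ hh hk]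
  have hid := hasDerivAt_id' (0 : ℝ)
  exact ((((hid.mul_const _).const_add _).add ((hid.fun_pow 2).mul_const _)).add
    ((hid.fun_pow 3).mul_const _)).congr_deriv (by simp)

theorem Mfun_le_Ifun (hα : 0 ≤ α₀) (hβ : 0 ≤ β₀) (hf : InH1 f) (hg : InH1 g)
    (hconstr : ∫ x, f x ^ 2 * g x = lam) : Mfun α₀ β₀ lam ≤ Ifun α₀ β₀ f g := by
  refine csInf_le ⟨0, ?_⟩ ⟨f, g, hf, hg, hconstr, rfl⟩
  rintro _ ⟨a, b, _, _, _, rfl⟩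
  exact integral_nonneg fun x => by positivity

theorem Mfun_mul_rpow_le_Ifun (hα : 0 ≤ α₀) (hβ : 0 ≤ β₀) (hf : InH1 f) (hg : InH1 g)
    (hpos : 0 < (∫ x, f x ^ 2 * g x) / lam) :
    Mfun α₀ β₀ lam * ((∫ x, f x ^ 2 * g x) / lam) ^ (2 / 3 : ℝ) ≤ Ifun α₀ β₀ f g := by
  set r := (∫ x, f x ^ 2 * g x) / lam with hr
  let t : ℝ := r ^ (-(1 / 3) : ℝ)
  have ht2 : t ^ 2 = (r ^ (2 / 3 : ℝ))⁻¹ := by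
    rw [← Real.rpow_neg hpos.le, ← Real.rpow_mul_natCast hpos.le]; norm_num
  have ht3 : t ^ 3 = r⁻¹ := by
    rw [← Real.rpow_neg_one, ← Real.rpow_mul_natCast hpos.le]; norm_num
  have hadm : ∫ x, (t * f x) ^ 2 * (t * g x) = lam := by
    obtain ⟨hm, hlam⟩ := div_ne_zero_iff.1 hpos.ne'
    rw [constraint_const_mul, ht3, hr]
    field_simp
  have hle := Mfun_le_Ifun hα hβ (hf.const_mul t) (hg.const_mul t) hadm
  rw [Ifun_const_mul, ht2, inv_mul_eq_div] at hle
  exact (le_div_iff₀ (by positivity)).1 hle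

theorem Iform_eq_of_isMinimizer (hα : 0 ≤ α₀) (hβ : 0 ≤ β₀) (hlam : lam ≠ 0) (hφ : InH1 φ)
    (hψ : InH1 ψ) (hconstr : ∫ x, φ x ^ 2 * ψ x = lam)
    (hmin : Ifun α₀ β₀ φ ψ = Mfun α₀ β₀ lam) (hh : InH1 h) (hk : InH1 k) :
    Iform α₀ β₀ φ ψ h k = Mfun α₀ β₀ lam / (3 * lam) * constraintDeriv φ ψ h k := by
  let J : ℝ → ℝ := fun ε => Ifun α₀ β₀ (fun x => φ x + ε * h x) (fun x => ψ x + ε * k x)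
  let m : ℝ → ℝ := fun ε => ∫ x, (φ x + ε * h x) ^ 2 * (ψ x + ε * k x)
  have hJ0 : J 0 = Mfun α₀ β₀ lam := by simpa [J] using hmin
  have hm0 : m 0 = lam := by simpa [m] using hconstr
  have hm : HasDerivAt m (constraintDeriv φ ψ h k) 0 :=
    hasDerivAt_constraint_add_mul hφ hψ hh hk
  have hpos : ∀ᶠ ε in 𝓝 0, 0 < m ε / lam :=
    (hm.continuousAt.div_const lam).eventually_const_lt (by simp [hm0, hlam])
  have hscaling : ∀ᶠ ε in 𝓝 0, J 0 * (m ε / m 0) ^ (2 / 3 : ℝ) ≤ J ε := by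
    filter_upwards [hpos] with ε hε
    rw [hJ0, hm0]
    exact Mfun_mul_rpow_le_Ifun hα hβ (hφ.add (hh.const_mul ε)) (hψ.add (hk.const_mul ε)) hε
  have hmultiplier := hasDerivAt_eq_of_mul_rpow_le (hasDerivAt_Ifun_add_mul hφ hψ hh hk) hm
    (hm0 ▸ hlam) hscaling
  simp only [zero_mul, add_zero, hmin, hm0] at hmultiplier
  field_simp at hmultiplier ⊢
  linarith

/-! ### Regularity of solutions -/

theorem hasDerivAt_deriv_of_Iform_eq {c : ℝ} (hφ : InH1 φ) (hψ : InH1 ψ)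
    (hweak : ∀ h k : ℝ → ℝ, InH1 h → InH1 k →
      Iform α₀ β₀ φ ψ h k = c * constraintDeriv φ ψ h k) :
    (∀ x, HasDerivAt (deriv φ) (α₀ * φ x - 2 * c * (φ x * ψ x)) x) ∧
      ∀ x, HasDerivAt (deriv ψ) (β₀ * ψ x - c * (φ x * φ x)) x := by
  have hφc := hφ.1.continuous
  have hψc := hψ.1.continuous
  have hzero : InH1 fun _ => 0 :=
    .of_contDiff_of_hasCompactSupport contDiff_const .zero
  have htest : ∀ {g : ℝ → ℝ}, ContDiff ℝ ∞ g → HasCompactSupport g → InH1 g := fun hg hgs =>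
    .of_contDiff_of_hasCompactSupport (hg.of_le (by simp)) hgs
  have hresidual : ∀ h k : ℝ → ℝ, InH1 h → InH1 k →
      ∫ x, ((deriv φ x * deriv h x + deriv ψ x * deriv k x + α₀ * (φ x * h x) + β₀ * (ψ x * k x))
        - c * (2 * (φ x * ψ x * h x) + φ x * φ x * k x)) = 0 := fun h k hh hk => by
    rw [integral_sub (integrable_Iform hφ hψ hh hk)
      ((integrable_constraintDeriv hφ hψ hh hk).const_mul c), integral_const_mul]
    exact sub_eq_zero.2 (hweak h k hh hk)
  constructor
  · refine hasDerivAt_deriv_of_weak hφ.1 (hφ.memLp_deriv.locallyIntegrable one_le_two)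
      (by fun_prop) fun g hg hgs => ?_
    rw [← hresidual g (fun _ => 0) (htest hg hgs) hzero]
    congr 1; ext x
    simp only [deriv_const, smul_eq_mul]
    ring
  · refine hasDerivAt_deriv_of_weak hψ.1 (hψ.memLp_deriv.locallyIntegrable one_le_two)
      (by fun_prop) fun g hg hgs => ?_
    rw [← hresidual (fun _ => 0) g hzero (htest hg hgs)]
    congr 1; ext x
    simp only [deriv_const, smul_eq_mul]
    ring

theorem inHk_succ_of_hasDerivAt_deriv {a b c d : ℝ} (hφ : InH1 φ) (hψ : InH1 ψ)
    (hφ' : ∀ x, HasDerivAt (deriv φ) (a * φ x - b * (φ x * ψ x)) x)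
    (hψ' : ∀ x, HasDerivAt (deriv ψ) (c * ψ x - d * (φ x * φ x)) x) (n : ℕ) :
    InHk (n + 1) φ ∧ InHk (n + 1) ψ := by
  induction n with
  | zero => exact ⟨hφ.inHk_one, hψ.inHk_one⟩
  | succ n ih =>
    obtain ⟨ihφ, ihψ⟩ := ih
    exact ⟨hφ.inHk_add_two hφ' ((ihφ.const_mul a).sub ((ihφ.mul ihψ).const_mul b)).of_succ,
      hψ.inHk_add_two hψ' ((ihψ.const_mul c).sub ((ihφ.mul ihφ).const_mul d)).of_succ⟩

theorem minimizer_smooth_Hinfty_general (hα : 0 ≤ α₀) (hβ : 0 ≤ β₀) (hlam : lam ≠ 0)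
    (hφ : InH1 φ) (hψ : InH1 ψ) (hconstr : (∫ x : ℝ, φ x ^ 2 * ψ x) = lam)
    (hmin : Ifun α₀ β₀ φ ψ = Mfun α₀ β₀ lam) :
    ContDiff ℝ (⊤ : ℕ∞) φ ∧ ContDiff ℝ (⊤ : ℕ∞) ψ ∧
      (∀ k : ℕ, Integrable (fun x => iteratedDeriv k φ x ^ 2)) ∧
      (∀ k : ℕ, Integrable (fun x => iteratedDeriv k ψ x ^ 2)) := by
  obtain ⟨hφ', hψ'⟩ := hasDerivAt_deriv_of_Iform_eq hφ hψ fun h k hh hk =>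
    Iform_eq_of_isMinimizer hα hβ hlam hφ hψ hconstr hmin hh hk
  have hHk := inHk_succ_of_hasDerivAt_deriv hφ hψ hφ' hψ'
  exact ⟨contDiff_infty.2 fun n => (hHk n).1.contDiff,
    contDiff_infty.2 fun n => (hHk n).2.contDiff,
    fun k => (hHk k).1.of_succ.memLp_iteratedDeriv.integrable_sq,
    fun k => (hHk k).2.of_succ.memLp_iteratedDeriv.integrable_sq⟩

end Variation

/-- any minimizer `(φ, ψ)` is smooth and lies in `H^∞(ℝ)`: every
iterated derivative is square-integrable. -/
theorem minimizer_smooth_Hinfty (α₀ β₀ lam : ℝ)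
    (hα : 0 < α₀) (hβ : 0 < β₀) (hlam : 0 < lam)
    (φ ψ : ℝ → ℝ) (hφ : InH1 φ) (hψ : InH1 ψ)
    (hconstr : (∫ x : ℝ, φ x ^ 2 * ψ x) = lam)
    (hmin : Ifun α₀ β₀ φ ψ = Mfun α₀ β₀ lam) :
    ContDiff ℝ (⊤ : ℕ∞) φ ∧ ContDiff ℝ (⊤ : ℕ∞) ψ ∧
      (∀ k : ℕ, Integrable (fun x => iteratedDeriv k φ x ^ 2)) ∧
      (∀ k : ℕ, Integrable (fun x => iteratedDeriv k ψ x ^ 2)) :=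
  minimizer_smooth_Hinfty_general hα.le hβ.le hlam.ne' hφ hψ hconstr hmin
end
end

section
/- Let f, g : ℝ → ℝ be continuously differentiable with f, g and g′ square-integrable and f² g integrable. Then | ∫_ℝ f(x)² g(x) dx | ≤ ‖f‖_{L²}² · ( 2 sup_{y ∈ ℝ} ∫_{y − 1/2}^{y + 1/2} ( g′(x)² + g(x)² ) dx )^{1/2}. -/
/-!
On a unit interval, averaging `‖g x‖ ≤ ‖g t‖ + ∫ ‖g'‖` over `t` gives `‖g x‖ ≤ ∫ (‖g‖ + ‖g'‖)`,
and Cauchy–Schwarz turns this into `‖g x‖ ^ 2 ≤ 2 * ∫ (‖g'‖ ^ 2 + ‖g‖ ^ 2)`. Hence `g` is bounded by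
the square root on the right-hand side, and it remains to integrate against the weight `f ^ 2`.
-/

open MeasureTheory intervalIntegral

noncomputable section

open Set

theorem sq_integral_le_measureReal_univ_mul {α : Type*} [MeasurableSpace α] {μ : Measure α}
    [IsFiniteMeasure μ] {f : α → ℝ} (hf : MemLp f 2 μ) :
    (∫ x, f x ∂μ) ^ 2 ≤ μ.real univ * ∫ x, f x ^ 2 ∂μ := by
  obtain rfl | hμ := eq_zero_or_neZero μ
  · simp
  have jensen : (⨍ x, f x ∂μ) ^ 2 ≤ ⨍ x, f x ^ 2 ∂μ :=
    even_two.convexOn_pow.map_average_le (continuousOn_pow 2) isClosed_univ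
      (.of_forall fun _ => mem_univ _) (hf.integrable one_le_two) hf.integrable_sq
  rw [← measure_smul_average μ f, ← measure_smul_average μ (fun x => f x ^ 2), smul_eq_mul,
    smul_eq_mul, mul_pow, ← mul_assoc, ← sq]
  gcongr

theorem bddAbove_range_intervalIntegral {ι : Type*} {μ : Measure ℝ} {f : ℝ → ℝ}
    (hf : Integrable f μ) (a b : ι → ℝ) : BddAbove (range fun i => ∫ x in a i..b i, f x ∂μ) := by
  refine ⟨∫ x, ‖f x‖ ∂μ, forall_mem_range.2 fun i => ?_⟩
  calc ∫ x in a i..b i, f x ∂μ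
      ≤ ‖∫ x in a i..b i, f x ∂μ‖ := Real.le_norm_self _
    _ ≤ ∫ x in uIoc (a i) (b i), ‖f x‖ ∂μ := norm_integral_le_integral_norm_uIoc
    _ ≤ ∫ x, ‖f x‖ ∂μ := setIntegral_le_integral hf.norm (.of_forall fun _ => norm_nonneg _)

section Sobolev

variable {E : Type*} [NormedAddCommGroup E] [NormedSpace ℝ E] {g : ℝ → E} {a b x : ℝ}

theorem norm_sub_le_integral_norm_deriv {t : ℝ} (hgc : ContinuousOn g (Icc a b))
    (hgd : DifferentiableOn ℝ g (Ioo a b)) (hg' : IntervalIntegrable (deriv g) volume a b)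
    (hx : x ∈ Icc a b) (ht : t ∈ Icc a b) : ‖g x - g t‖ ≤ ∫ s in a..b, ‖deriv g s‖ := by
  wlog htx : t ≤ x generalizing x t
  · rw [norm_sub_rev]
    exact this ht hx (le_of_not_ge htx)
  have hsub : uIcc t x ⊆ uIcc a b := by
    rw [uIcc_of_le htx, uIcc_of_le (hx.1.trans hx.2)]
    exact Icc_subset_Icc ht.1 hx.2
  calc ‖g x - g t‖
      ≤ ∫ s in t..x, ‖deriv g s‖ :=
        norm_sub_le_integral_of_norm_deriv_le_of_le htx (hgc.mono (Icc_subset_Icc ht.1 hx.2))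
          (hgd.mono (Ioo_subset_Ioo ht.1 hx.2)) (.of_forall fun _ _ => le_rfl)
          (hg'.norm.mono_set hsub)
    _ ≤ ∫ s in a..b, ‖deriv g s‖ :=
        integral_mono_interval ht.1 htx hx.2 (.of_forall fun _ => norm_nonneg _) hg'.norm

theorem length_mul_norm_le_integral (hgc : ContinuousOn g (Icc a b))
    (hgd : DifferentiableOn ℝ g (Ioo a b)) (hg' : IntervalIntegrable (deriv g) volume a b)
    (hx : x ∈ Icc a b) :
    (b - a) * ‖g x‖ ≤ ∫ t in a..b, (‖g t‖ + (b - a) * ‖deriv g t‖) := by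
  have hab : a ≤ b := hx.1.trans hx.2
  have hg : IntervalIntegrable (fun t => ‖g t‖) volume a b :=
    (hgc.intervalIntegrable_of_Icc hab).norm
  have bound (t : ℝ) (ht : t ∈ Icc a b) : ‖g x‖ ≤ ‖g t‖ + ∫ s in a..b, ‖deriv g s‖ := by
    linarith [norm_sub_norm_le (g x) (g t), norm_sub_le_integral_norm_deriv hgc hgd hg' hx ht]
  calc (b - a) * ‖g x‖
      = ∫ _ in a..b, ‖g x‖ := by rw [intervalIntegral.integral_const, smul_eq_mul]
    _ ≤ ∫ t in a..b, (‖g t‖ + ∫ s in a..b, ‖deriv g s‖) :=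
        integral_mono_on hab intervalIntegrable_const (hg.add intervalIntegrable_const) bound
    _ = ∫ t in a..b, (‖g t‖ + (b - a) * ‖deriv g t‖) := by
        rw [integral_add hg intervalIntegrable_const, integral_add hg (hg'.norm.const_mul _),
          intervalIntegral.integral_const, smul_eq_mul, intervalIntegral.integral_const_mul]

theorem length_mul_norm_sq_le_integral (hgc : ContinuousOn g (Icc a b))
    (hgd : DifferentiableOn ℝ g (Ioo a b)) (hg' : MemLp (deriv g) 2 (volume.restrict (Ioc a b)))
    (hx : x ∈ Icc a b) :
    (b - a) * ‖g x‖ ^ 2 ≤ 2 * ∫ t in a..b, ((b - a) ^ 2 * ‖deriv g t‖ ^ 2 + ‖g t‖ ^ 2) := by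
  have hab : a ≤ b := hx.1.trans hx.2
  obtain rfl | hlt := hab.eq_or_lt
  · simp
  have hlen : 0 < b - a := sub_pos.2 hlt
  have hg : MemLp g 2 (volume.restrict (Ioc a b)) :=
    (memLp_two_iff_integrable_sq_norm
      ((hgc.mono Ioc_subset_Icc_self).aestronglyMeasurable measurableSet_Ioc)).2
      ((hgc.norm.pow 2).integrableOn_Icc.mono_set Ioc_subset_Icc_self)
  let h (t : ℝ) : ℝ := ‖g t‖ + (b - a) * ‖deriv g t‖
  have hh : MemLp h 2 (volume.restrict (Ioc a b)) := hg.norm.add (hg'.norm.const_mul _)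
  have cauchySchwarz : (∫ t in a..b, h t) ^ 2 ≤ (b - a) * ∫ t in a..b, h t ^ 2 := by
    simpa [integral_of_le hab, hab] using sq_integral_le_measureReal_univ_mul hh
  have hg'i : IntervalIntegrable (deriv g) volume a b :=
    (intervalIntegrable_iff_integrableOn_Ioc_of_le hab).2 (hg'.integrable one_le_two)
  have hsq : ∫ t in a..b, h t ^ 2 ≤
      2 * ∫ t in a..b, ((b - a) ^ 2 * ‖deriv g t‖ ^ 2 + ‖g t‖ ^ 2) := by
    rw [← intervalIntegral.integral_const_mul, integral_of_le hab, integral_of_le hab]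
    refine integral_mono hh.integrable_sq
      (((hg'.norm.integrable_sq.const_mul _).add hg.norm.integrable_sq).const_mul 2) fun t => ?_
    calc h t ^ 2
        ≤ 2 * (‖g t‖ ^ 2 + ((b - a) * ‖deriv g t‖) ^ 2) := add_sq_le
      _ = 2 * ((b - a) ^ 2 * ‖deriv g t‖ ^ 2 + ‖g t‖ ^ 2) := by ring
  refine le_of_mul_le_mul_left ?_ hlen
  calc (b - a) * ((b - a) * ‖g x‖ ^ 2)
      = ((b - a) * ‖g x‖) ^ 2 := by ring
    _ ≤ (∫ t in a..b, h t) ^ 2 := by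
        have := length_mul_norm_le_integral hgc hgd hg'i hx
        gcongr
    _ ≤ (b - a) * ∫ t in a..b, h t ^ 2 := cauchySchwarz
    _ ≤ (b - a) * (2 * ∫ t in a..b, ((b - a) ^ 2 * ‖deriv g t‖ ^ 2 + ‖g t‖ ^ 2)) :=
        mul_le_mul_of_nonneg_left hsq hlen.le

theorem norm_le_sqrt_two_mul_iSup [CompleteSpace E] (hg : Differentiable ℝ g)
    (hg'2 : LocallyIntegrable (fun x => ‖deriv g x‖ ^ 2))
    (hbdd : BddAbove (range fun y : ℝ =>
      ∫ x in (y - 1 / 2)..(y + 1 / 2), (‖deriv g x‖ ^ 2 + ‖g x‖ ^ 2))) (x : ℝ) :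
    ‖g x‖ ≤ Real.sqrt
      (2 * ⨆ y : ℝ, ∫ x in (y - 1 / 2)..(y + 1 / 2), (‖deriv g x‖ ^ 2 + ‖g x‖ ^ 2)) := by
  have hL2 : MemLp (deriv g) 2 (volume.restrict (Ioc (x - 1 / 2) (x + 1 / 2))) :=
    (memLp_two_iff_integrable_sq_norm (aestronglyMeasurable_deriv g _)).2
      ((hg'2.integrableOn_isCompact isCompact_Icc).mono_set Ioc_subset_Icc_self)
  have hlen : x + 1 / 2 - (x - 1 / 2) = 1 := by ring
  have hsq := length_mul_norm_sq_le_integral hg.continuous.continuousOn hg.differentiableOn hL2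
    (x := x) ⟨by linarith, by linarith⟩
  simp only [hlen, one_pow, one_mul] at hsq
  refine Real.le_sqrt_of_sq_le (hsq.trans ?_)
  gcongr
  exact le_ciSup hbdd x

theorem integral_f_sq_g_bound_general [CompleteSpace E] {μ : Measure ℝ} {w : ℝ → ℝ}
    (hw : Integrable w μ) (hg : Differentiable ℝ g)
    (hg'2 : LocallyIntegrable (fun x => ‖deriv g x‖ ^ 2))
    (hbdd : BddAbove (range fun y : ℝ =>
      ∫ x in (y - 1 / 2)..(y + 1 / 2), (‖deriv g x‖ ^ 2 + ‖g x‖ ^ 2))) :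
    ‖∫ x, w x • g x ∂μ‖ ≤ (∫ x, ‖w x‖ ∂μ) * Real.sqrt
      (2 * ⨆ y : ℝ, ∫ x in (y - 1 / 2)..(y + 1 / 2), (‖deriv g x‖ ^ 2 + ‖g x‖ ^ 2)) := by
  rw [← MeasureTheory.integral_mul_const]
  refine MeasureTheory.norm_integral_le_of_norm_le (hw.norm.mul_const _) (.of_forall fun x => ?_)
  rw [norm_smul]
  gcongr
  exact norm_le_sqrt_two_mul_iSup hg hg'2 hbdd x

end Sobolev

/-- `|∫ f² g| ≤ ‖f‖² · (2 sup_y ∫_{y−1/2}^{y+1/2} (g′² + g²))^{1/2}`. -/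
theorem integral_f_sq_g_bound (f g : ℝ → ℝ) (hf : ContDiff ℝ 1 f) (hg : ContDiff ℝ 1 g)
    (hf2 : Integrable (fun x => f x ^ 2)) (hg2 : Integrable (fun x => g x ^ 2))
    (hg'2 : Integrable (fun x => deriv g x ^ 2))
    (hfg : Integrable (fun x => f x ^ 2 * g x)) :
    |∫ x : ℝ, f x ^ 2 * g x| ≤
      (∫ x : ℝ, f x ^ 2) *
        Real.sqrt (2 * ⨆ y : ℝ, ∫ x in (y - 1 / 2)..(y + 1 / 2), (deriv g x ^ 2 + g x ^ 2)) := by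
  simpa using integral_f_sq_g_bound_general hf2 (hg.differentiable one_ne_zero)
    (by simpa using hg'2.locallyIntegrable)
    (by simpa using bddAbove_range_intervalIntegral (hg'2.add hg2) (· - 1 / 2) (· + 1 / 2))
end
end

section
/- Let λ > 0 and let {(f_n, g_n)} be a sequence of continuously differentiable pairs with f_n, f_n′, g_n, g_n′ square-integrable, sup_n ( ‖f_n‖_{L²}² + ‖f_n′‖_{L²}² + ‖g_n‖_{L²}² + ‖g_n′‖_{L²}² ) < ∞, and lim_{n→∞} ∫_ℝ f_n² g_n dx = λ. Setting ρ_n(x) = f_n′(x)² + g_n′(x)² + f_n(x)² + g_n(x)², there exists γ₀ > 0 such that liminf_{n→∞} sup_{y ∈ ℝ} ∫_{y−1/2}^{y+1/2} ρ_n(x) dx ≥ γ₀; in particular the concentration functions of ρ_n at width 1/2 do not vanish in the limit. -/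
/-!
Absolute continuity gives `u(x)² - u(t)² ≤ ∫ 2 |u u'| ≤ ∫ (u² + u'²)` on any interval containing
`x` and `t`; averaging over `t` in a window of half-width `ω` around `x` bounds `u(x)²` by
`1 + 1 / (2 ω)` times the concentration function at width `ω`. Hence vanishing would force
`g_n → 0` uniformly, and since `∫ f_n²` is bounded, also `∫ f_n² g_n → 0`.
-/

open MeasureTheory intervalIntegral Filter Topology

noncomputable section

/-- The concentration function of the density `ρ` at width `ω`: the largest mass of a window
`[y - ω, y + ω]`. The supremum is taken in `ℝ`, so it is meaningful only for densities whose window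
masses are bounded, e.g. nonnegative integrable ones. -/
def concentration (ρ : ℝ → ℝ) (ω : ℝ) : ℝ :=
  ⨆ y : ℝ, ∫ x in (y - ω)..(y + ω), ρ x

/-- The local density `f′² + g′² + f² + g²` of a pair `(f, g)`. -/
def pairDensity (f g : ℝ → ℝ) (x : ℝ) : ℝ :=
  deriv f x ^ 2 + deriv g x ^ 2 + f x ^ 2 + g x ^ 2

/-- Membership in the Sobolev space `H¹(ℝ)`, encoded through the continuous representative: `u` is
locally absolutely continuous, and `u` and its (almost everywhere defined) derivative are square
integrable. -/
structure MemH1 (u : ℝ → ℝ) : Prop where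
  absolutelyContinuousOnInterval : ∀ a b, AbsolutelyContinuousOnInterval u a b
  integrable_sq : Integrable fun x => u x ^ 2
  integrable_deriv_sq : Integrable fun x => deriv u x ^ 2

lemma memH1_of_contDiff {u : ℝ → ℝ} (hu : ContDiff ℝ 1 u) (hu2 : Integrable fun x => u x ^ 2)
    (hu'2 : Integrable fun x => deriv u x ^ 2) : MemH1 u :=
  ⟨fun _ _ => hu.contDiffOn.absolutelyContinuousOnInterval, hu2, hu'2⟩

section Concentration

variable {ρ : ℝ → ℝ} {ω : ℝ}

lemma concentration_nonneg (hρ0 : 0 ≤ ρ) (hω : 0 ≤ ω) : 0 ≤ concentration ρ ω :=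
  Real.iSup_nonneg fun y => intervalIntegral.integral_nonneg (by linarith) fun x _ => hρ0 x

lemma integral_window_le_integral (hρ : Integrable ρ) (hρ0 : 0 ≤ ρ) (hω : 0 ≤ ω) (y : ℝ) :
    ∫ x in (y - ω)..(y + ω), ρ x ≤ ∫ x, ρ x := by
  rw [integral_of_le (by linarith)]
  exact setIntegral_le_integral hρ (.of_forall hρ0)

lemma concentration_le_integral (hρ : Integrable ρ) (hρ0 : 0 ≤ ρ) (hω : 0 ≤ ω) :
    concentration ρ ω ≤ ∫ x, ρ x :=
  ciSup_le (integral_window_le_integral hρ hρ0 hω)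

lemma integral_window_le_concentration (hρ : Integrable ρ) (hρ0 : 0 ≤ ρ) (hω : 0 ≤ ω) (y : ℝ) :
    ∫ x in (y - ω)..(y + ω), ρ x ≤ concentration ρ ω :=
  le_ciSup (f := fun y => ∫ x in (y - ω)..(y + ω), ρ x)
    ⟨_, Set.forall_mem_range.2 (integral_window_le_integral hρ hρ0 hω)⟩ y

end Concentration

section Sobolev

variable {u ρ : ℝ → ℝ} {a b : ℝ}

lemma abs_sq_sub_sq_le_integral (hu : AbsolutelyContinuousOnInterval u a b)
    (hρ : IntervalIntegrable ρ volume a b) (hle : ∀ x, deriv u x ^ 2 + u x ^ 2 ≤ ρ x)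
    {s t : ℝ} (hs : s ∈ Set.Icc a b) (ht : t ∈ Set.Icc a b) :
    |u t ^ 2 - u s ^ 2| ≤ ∫ x in a..b, ρ x := by
  have hab : a ≤ b := hs.1.trans hs.2
  have hρ0 (x : ℝ) : 0 ≤ ρ x := le_trans (by positivity) (hle x)
  have hsub : Set.uIcc s t ⊆ Set.uIcc a b := by
    rw [Set.uIcc_of_le hab]
    exact Set.uIcc_subset_Icc hs ht
  have hst := hu.mono hsub
  calc |u t ^ 2 - u s ^ 2| = |∫ x in s..t, deriv u x * u x + u x * deriv u x| := by
        rw [hst.integral_deriv_mul_eq_sub hst, sq, sq]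
    _ ≤ |∫ x in s..t, ρ x| := by
        rw [← Real.norm_eq_abs]
        refine norm_integral_le_abs_of_norm_le (.of_forall fun x => ?_) (hρ.mono_set hsub)
        rw [Real.norm_eq_abs, abs_le]
        constructor <;>
          nlinarith [hle x, sq_nonneg (u x + deriv u x), sq_nonneg (u x - deriv u x)]
    _ ≤ |∫ x in a..b, ρ x| :=
        abs_integral_mono_interval (Set.uIoc_subset_uIoc_of_uIcc_subset_uIcc hsub)
          (.of_forall hρ0) hρ
    _ = ∫ x in a..b, ρ x := abs_of_nonneg (intervalIntegral.integral_nonneg hab fun x _ => hρ0 x)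

lemma mul_sq_le_mul_integral (hu : AbsolutelyContinuousOnInterval u a b)
    (hρ : IntervalIntegrable ρ volume a b) (hle : ∀ x, deriv u x ^ 2 + u x ^ 2 ≤ ρ x)
    {x : ℝ} (hx : x ∈ Set.Icc a b) :
    (b - a) * u x ^ 2 ≤ (1 + (b - a)) * ∫ t in a..b, ρ t := by
  set K := ∫ t in a..b, ρ t
  calc (b - a) * u x ^ 2 = ∫ _ in a..b, u x ^ 2 := by simp
    _ ≤ ∫ t in a..b, (ρ t + K) := by
        refine integral_mono_on (hx.1.trans hx.2) intervalIntegrable_const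
          (hρ.add intervalIntegrable_const) fun t ht => ?_
        have hdiff : u x ^ 2 - u t ^ 2 ≤ K :=
          (le_abs_self _).trans (abs_sq_sub_sq_le_integral hu hρ hle ht hx)
        linarith [hle t, sq_nonneg (deriv u t)]
    _ = (1 + (b - a)) * K := by
        rw [integral_add hρ intervalIntegrable_const, intervalIntegral.integral_const, smul_eq_mul]
        ring

variable {ω : ℝ}

lemma sq_le_mul_concentration (hu : ∀ a b, AbsolutelyContinuousOnInterval u a b)
    (hρ : Integrable ρ) (hle : ∀ x, deriv u x ^ 2 + u x ^ 2 ≤ ρ x) (hω : 0 < ω) (x : ℝ) :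
    u x ^ 2 ≤ (1 + 1 / (2 * ω)) * concentration ρ ω := by
  have hρ0 : 0 ≤ ρ := fun x => le_trans (by positivity) (hle x)
  have hx : x ∈ Set.Icc (x - ω) (x + ω) := ⟨by linarith, by linarith⟩
  have hwidth : x + ω - (x - ω) = 2 * ω := by ring
  have hwindow := mul_sq_le_mul_integral (hu _ _) hρ.intervalIntegrable hle hx
  rw [hwidth] at hwindow
  calc u x ^ 2 = 2 * ω * u x ^ 2 / (2 * ω) := by field_simp
    _ ≤ (1 + 2 * ω) * (∫ t in (x - ω)..(x + ω), ρ t) / (2 * ω) := by gcongr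
    _ ≤ (1 + 2 * ω) * concentration ρ ω / (2 * ω) := by
        gcongr
        exact integral_window_le_concentration hρ hρ0 hω.le x
    _ = (1 + 1 / (2 * ω)) * concentration ρ ω := by field_simp; ring

lemma sq_integral_mul_le_mul_concentration {φ : ℝ → ℝ}
    (hu : ∀ a b, AbsolutelyContinuousOnInterval u a b) (hρ : Integrable ρ)
    (hle : ∀ x, deriv u x ^ 2 + u x ^ 2 ≤ ρ x) (hφ : ∀ x, |φ x| ≤ ρ x) (hω : 0 < ω) :
    (∫ x, φ x * u x) ^ 2 ≤ (1 + 1 / (2 * ω)) * concentration ρ ω * (∫ x, ρ x) ^ 2 := by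
  set M := (1 + 1 / (2 * ω)) * concentration ρ ω
  have hM (x : ℝ) : u x ^ 2 ≤ M := sq_le_mul_concentration hu hρ hle hω x
  have habs : |∫ x, φ x * u x| ≤ √M * ∫ x, ρ x := by
    rw [← Real.norm_eq_abs, ← MeasureTheory.integral_const_mul]
    refine norm_integral_le_of_norm_le (hρ.const_mul √M) (.of_forall fun x => ?_)
    rw [norm_mul, mul_comm]
    exact mul_le_mul (Real.abs_le_sqrt (hM x)) (hφ x) (norm_nonneg _) (Real.sqrt_nonneg _)
  calc (∫ x, φ x * u x) ^ 2 = |∫ x, φ x * u x| ^ 2 := (sq_abs _).symm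
    _ ≤ (√M * ∫ x, ρ x) ^ 2 := by gcongr
    _ = M * (∫ x, ρ x) ^ 2 := by rw [mul_pow, Real.sq_sqrt ((sq_nonneg _).trans (hM 0))]

end Sobolev

section Pair

variable {f g : ℝ → ℝ}

lemma pairDensity_nonneg (f g : ℝ → ℝ) : 0 ≤ pairDensity f g := fun x => by
  unfold pairDensity
  positivity

lemma integrable_pairDensity (hf : MemH1 f) (hg : MemH1 g) : Integrable (pairDensity f g) :=
  ((hf.integrable_deriv_sq.add hg.integrable_deriv_sq).add hf.integrable_sq).add hg.integrable_sq

lemma integral_pairDensity (hf : MemH1 f) (hg : MemH1 g) :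
    ∫ x, pairDensity f g x =
      (∫ x, f x ^ 2) + (∫ x, deriv f x ^ 2) + (∫ x, g x ^ 2) + ∫ x, deriv g x ^ 2 := by
  have hderiv : Integrable fun x => deriv f x ^ 2 + deriv g x ^ 2 :=
    hf.integrable_deriv_sq.add hg.integrable_deriv_sq
  have hderivf : Integrable fun x => deriv f x ^ 2 + deriv g x ^ 2 + f x ^ 2 :=
    hderiv.add hf.integrable_sq
  simp only [pairDensity]
  rw [MeasureTheory.integral_add hderivf hg.integrable_sq,
    MeasureTheory.integral_add hderiv hf.integrable_sq,
    MeasureTheory.integral_add hf.integrable_deriv_sq hg.integrable_deriv_sq]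
  ring

lemma sq_integral_sq_mul_le_mul_concentration (hf : MemH1 f) (hg : MemH1 g) {ω : ℝ} (hω : 0 < ω) :
    (∫ x, f x ^ 2 * g x) ^ 2 ≤
      (1 + 1 / (2 * ω)) * concentration (pairDensity f g) ω * (∫ x, pairDensity f g x) ^ 2 := by
  refine sq_integral_mul_le_mul_concentration hg.absolutelyContinuousOnInterval
    (integrable_pairDensity hf hg) (fun x => ?_) (fun x => ?_) hω
  · unfold pairDensity
    linarith [sq_nonneg (deriv f x), sq_nonneg (f x)]
  · rw [abs_sq, pairDensity]
    linarith [sq_nonneg (deriv f x), sq_nonneg (deriv g x), sq_nonneg (g x)]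

end Pair

theorem no_vanishing_at_width_half_general {ι : Type*} {l : Filter ι} [l.NeBot] {ω lam : ℝ}
    (hω : 0 < ω) (hlam : lam ≠ 0) {f g : ι → ℝ → ℝ}
    (hf : ∀ i, MemH1 (f i)) (hg : ∀ i, MemH1 (g i))
    (hbdd : ∃ B : ℝ, ∀ i,
      (∫ x, f i x ^ 2) + (∫ x, deriv (f i) x ^ 2) +
        (∫ x, g i x ^ 2) + (∫ x, deriv (g i) x ^ 2) ≤ B)
    (hconstr : Tendsto (fun i => ∫ x, f i x ^ 2 * g i x) l (𝓝 lam)) :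
    ∃ γ₀ > (0 : ℝ), γ₀ ≤ liminf (fun i => concentration (pairDensity (f i) (g i)) ω) l := by
  obtain ⟨B₀, hB₀⟩ := hbdd
  set B := max B₀ 1
  have hB : 0 < B := lt_max_of_lt_right one_pos
  have hmass (i : ι) : ∫ x, pairDensity (f i) (g i) x ≤ B :=
    (integral_pairDensity (hf i) (hg i)).trans_le ((hB₀ i).trans (le_max_left _ _))
  have hmass0 (i : ι) : 0 ≤ ∫ x, pairDensity (f i) (g i) x :=
    integral_nonneg (pairDensity_nonneg _ _)
  have hconc (i : ι) : concentration (pairDensity (f i) (g i)) ω ≤ B :=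
    (concentration_le_integral (integrable_pairDensity (hf i) (hg i)) (pairDensity_nonneg _ _)
      hω.le).trans (hmass i)
  set C := 1 + 1 / (2 * ω)
  have hC : 0 < C := by positivity
  have hCB : 0 < C * B ^ 2 := mul_pos hC (pow_pos hB 2)
  refine ⟨lam ^ 2 / 2 / (C * B ^ 2), div_pos (by positivity) hCB, le_liminf_of_le
    (isBoundedUnder_of ⟨B, hconc⟩).isCoboundedUnder_flip ?_⟩
  have hlarge : ∀ᶠ i in l, lam ^ 2 / 2 < (∫ x, f i x ^ 2 * g i x) ^ 2 :=
    (hconstr.pow 2).eventually_const_lt (half_lt_self (by positivity))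
  filter_upwards [hlarge] with i hi
  have hest := sq_integral_sq_mul_le_mul_concentration (hf i) (hg i) hω
  have hconc0 : 0 ≤ concentration (pairDensity (f i) (g i)) ω :=
    concentration_nonneg (pairDensity_nonneg _ _) hω.le
  rw [div_le_iff₀ hCB]
  calc lam ^ 2 / 2 ≤ _ := hi.le.trans hest
    _ ≤ C * concentration (pairDensity (f i) (g i)) ω * B ^ 2 := by
        gcongr
        · exact hmass0 i
        · exact hmass i
    _ = concentration (pairDensity (f i) (g i)) ω * (C * B ^ 2) := by ring

/-- for a bounded sequence `(f_n, g_n)` with `∫ f_n² g_n → λ > 0`,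
the concentration functions of `ρ_n = f_n′² + g_n′² + f_n² + g_n²` at width `1/2`
stay bounded away from `0`: there is `γ₀ > 0` below their liminf. -/
theorem no_vanishing_at_width_half (lam : ℝ) (hlam : 0 < lam)
    (f g : ℕ → ℝ → ℝ)
    (hf : ∀ n, ContDiff ℝ 1 (f n)) (hg : ∀ n, ContDiff ℝ 1 (g n))
    (hf2 : ∀ n, Integrable (fun x => f n x ^ 2))
    (hf'2 : ∀ n, Integrable (fun x => deriv (f n) x ^ 2))
    (hg2 : ∀ n, Integrable (fun x => g n x ^ 2))
    (hg'2 : ∀ n, Integrable (fun x => deriv (g n) x ^ 2))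
    (hbdd : ∃ B : ℝ, ∀ n,
      (∫ x : ℝ, f n x ^ 2) + (∫ x : ℝ, deriv (f n) x ^ 2) +
        (∫ x : ℝ, g n x ^ 2) + (∫ x : ℝ, deriv (g n) x ^ 2) ≤ B)
    (hconstr : Tendsto (fun n => ∫ x : ℝ, f n x ^ 2 * g n x) atTop (𝓝 lam)) :
    ∃ γ₀ > (0 : ℝ),
      γ₀ ≤ liminf (fun n => ⨆ y : ℝ,
        ∫ x in (y - 1 / 2)..(y + 1 / 2),
          (deriv (f n) x ^ 2 + deriv (g n) x ^ 2 + f n x ^ 2 + g n x ^ 2)) atTop :=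
  no_vanishing_at_width_half_general one_half_pos hlam.ne'
    (fun n => memH1_of_contDiff (hf n) (hf2 n) (hf'2 n))
    (fun n => memH1_of_contDiff (hg n) (hg2 n) (hg'2 n)) hbdd hconstr
end
end

section
/- Let α₀ > 0 and β₀ > 0. For any σ₁ > 0 and σ₂ > 0, the infima satisfy the scaling relation M_{σ₁} = (σ₁/σ₂)^{2/3} M_{σ₂}. -/
/-! The functional `I` is homogeneous of degree 2 and the constraint `∫ f² g` is homogeneous of
degree 3 under `(f, g) ↦ (t f, t g)`. For `t ≠ 0` this dilation is invertible, so it multiplies the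
infimum by `t ^ 2` while multiplying the constraint level by `t ^ 3`. -/

open MeasureTheory Filter Topology

noncomputable section

open scoped Pointwise

lemma InH1.const_smul {f : ℝ → ℝ} (hf : InH1 f) (t : ℝ) : InH1 (t • f) := by
  obtain ⟨hdiff, hsq, hderiv⟩ := hf
  refine ⟨hdiff.const_smul t, ?_, ?_⟩
  · simpa only [Pi.smul_apply, smul_eq_mul, mul_pow] using hsq.const_mul (t ^ 2)
  · simpa only [deriv_const_smul_field, Pi.smul_apply, smul_eq_mul, mul_pow]
      using hderiv.const_mul (t ^ 2)

lemma integral_smul_sq_mul_smul {X : Type*} [MeasurableSpace X] (μ : Measure X) (t : ℝ)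
    (f g : X → ℝ) :
    ∫ x, (t • f) x ^ 2 * (t • g) x ∂μ = t ^ 3 * ∫ x, f x ^ 2 * g x ∂μ := by
  rw [← integral_const_mul]
  congr 1 with x
  simp only [Pi.smul_apply, smul_eq_mul]
  ring

lemma Ifun_smul_smul (α β t : ℝ) (f g : ℝ → ℝ) :
    Ifun α β (t • f) (t • g) = t ^ 2 * Ifun α β f g := by
  rw [Ifun, Ifun, ← integral_const_mul]
  congr 1 with x
  simp only [deriv_const_smul_field, Pi.smul_apply, smul_eq_mul]
  ring

lemma sq_smul_IvalSet_subset (α β lam t : ℝ) :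
    t ^ 2 • IvalSet α β lam ⊆ IvalSet α β (t ^ 3 * lam) := by
  rintro _ ⟨_, ⟨f, g, hf, hg, rfl, rfl⟩, rfl⟩
  exact ⟨t • f, t • g, hf.const_smul t, hg.const_smul t,
    integral_smul_sq_mul_smul volume t f g, Ifun_smul_smul α β t f g⟩

lemma IvalSet_pow_three_mul (α β lam : ℝ) {t : ℝ} (ht : t ≠ 0) :
    IvalSet α β (t ^ 3 * lam) = t ^ 2 • IvalSet α β lam := by
  refine Set.Subset.antisymm ?_ (sq_smul_IvalSet_subset α β lam t)
  rw [Set.subset_smul_set_iff₀ (pow_ne_zero 2 ht), ← inv_pow]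
  calc t⁻¹ ^ 2 • IvalSet α β (t ^ 3 * lam) ⊆ IvalSet α β (t⁻¹ ^ 3 * (t ^ 3 * lam)) :=
        sq_smul_IvalSet_subset α β (t ^ 3 * lam) t⁻¹
    _ = IvalSet α β lam := by rw [inv_pow, inv_mul_cancel_left₀ (pow_ne_zero 3 ht)]

lemma Mfun_pow_three_mul (α β lam : ℝ) {t : ℝ} (ht : t ≠ 0) :
    Mfun α β (t ^ 3 * lam) = t ^ 2 * Mfun α β lam := by
  rw [Mfun, Mfun, IvalSet_pow_three_mul α β lam ht, Real.sInf_smul_of_nonneg (sq_nonneg t),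
    smul_eq_mul]

/-- the scaling relation `M_{σ₁} = (σ₁/σ₂)^{2/3} M_{σ₂}`. -/
theorem Mlam_scaling (α₀ β₀ : ℝ) (hα : 0 < α₀) (hβ : 0 < β₀)
    (σ₁ σ₂ : ℝ) (hσ₁ : 0 < σ₁) (hσ₂ : 0 < σ₂) :
    Mfun α₀ β₀ σ₁ = (σ₁ / σ₂) ^ ((2 : ℝ) / 3) * Mfun α₀ β₀ σ₂ := by
  have hr : 0 < σ₁ / σ₂ := div_pos hσ₁ hσ₂
  set t : ℝ := (σ₁ / σ₂) ^ ((1 : ℝ) / 3) with ht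
  have ht_ne : t ≠ 0 := (Real.rpow_pos_of_pos hr _).ne'
  have ht_cube : t ^ 3 = σ₁ / σ₂ := by
    rw [ht, ← Real.rpow_mul_natCast hr.le]
    norm_num
  have ht_sq : t ^ 2 = (σ₁ / σ₂) ^ ((2 : ℝ) / 3) := by
    rw [ht, ← Real.rpow_mul_natCast hr.le]
    norm_num
  calc Mfun α₀ β₀ σ₁ = Mfun α₀ β₀ (t ^ 3 * σ₂) := by rw [ht_cube, div_mul_cancel₀ σ₁ hσ₂.ne']
    _ = t ^ 2 * Mfun α₀ β₀ σ₂ := Mfun_pow_three_mul α₀ β₀ σ₂ ht_ne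
    _ = (σ₁ / σ₂) ^ ((2 : ℝ) / 3) * Mfun α₀ β₀ σ₂ := by rw [ht_sq]
end
end
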